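/- arXiv:1005.0521 — 2 statements merged into one kernel-verified Lean document; each statement's English description precedes it below -/
import Mathlib

section
/- Let α be a type and let R, Ro be binary relations on α with Ro ⊆ R, satisfying the outermost local commutation property: whenever Ro G H and R G J with H ≠ J, either Ro J H, or there exists K with R H K and Ro J K. If G Ro^n H with H R-normal and G R^m J with J R-normal, then H = J and n ≤ m. -/
/-- `NSteps R n x y` : there is a chain `x = f 0, f 1, …, f n = y` with
`R (f i) (f (i+1))` for each `i < n`, i.e. an `n`-step `R`-reduction sequence. -/
def NSteps {α : Type*} (R : α → α → Prop) (n : ℕ) (x y : α) : Prop :=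
  ∃ f : ℕ → α, f 0 = x ∧ f n = y ∧ ∀ i < n, R (f i) (f (i + 1))

/-- `x` is `R`-normal: no `R`-step is possible from `x`. -/
def RNormal {α : Type*} (R : α → α → Prop) (x : α) : Prop :=
  ¬ ∃ y, R x y

/-!
Reductions `G R^m J` and `G Ro^n H` are closed by tiling them with local commutation squares.
Across a square an `R`-step may be erased but is never duplicated, and an `Ro`-step disappears only
by coinciding with an `R`-step, which disappears with it. So if the tiling closes with `H R^k K` and
`J Ro^l K`, at least as many `R`-steps as `Ro`-steps are lost: `n - l ≤ m - k`, that is,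
`n + k ≤ m + l`. Normality of `H` and `J` forces `k = l = 0`.
-/

section Reduction

variable {α : Type*} {R S : α → α → Prop} {m n : ℕ} {x y z : α}

theorem nSteps_zero : NSteps R 0 x y ↔ x = y :=
  ⟨fun ⟨_, hx, hy, _⟩ => hx.symm.trans hy, fun h => ⟨fun _ => x, rfl, h, by simp⟩⟩

theorem nSteps_succ : NSteps R (n + 1) x z ↔ ∃ y, R x y ∧ NSteps R n y z := by
  constructor
  · rintro ⟨f, rfl, rfl, hf⟩
    exact ⟨f 1, hf 0 n.succ_pos, fun i => f (i + 1), rfl, rfl,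
      fun i hi => hf (i + 1) (Nat.succ_lt_succ hi)⟩
  · rintro ⟨_, hx, f, rfl, rfl, hf⟩
    refine ⟨fun i => Nat.casesOn i x f, rfl, rfl, fun i hi => ?_⟩
    cases i with
    | zero => exact hx
    | succ i => exact hf i (Nat.lt_of_succ_lt_succ hi)

theorem NSteps.trans (hxy : NSteps R m x y) (hyz : NSteps R n y z) : NSteps R (m + n) x z := by
  induction m generalizing x with
  | zero =>
    obtain rfl := nSteps_zero.1 hxy
    rwa [Nat.zero_add]
  | succ m ih =>
    obtain ⟨w, hxw, hwy⟩ := nSteps_succ.1 hxy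
    rw [Nat.succ_add]
    exact nSteps_succ.2 ⟨w, hxw, ih hwy⟩

theorem RNormal.anti (hSR : ∀ x y, S x y → R x y) (hx : RNormal R x) : RNormal S x :=
  fun ⟨y, hxy⟩ => hx ⟨y, hSR x y hxy⟩

theorem RNormal.nSteps_iff (hx : RNormal R x) : NSteps R n x y ↔ n = 0 ∧ x = y := by
  cases n with
  | zero => simp only [nSteps_zero, true_and]
  | succ n =>
    refine ⟨fun h => ?_, fun h => absurd h.1 n.succ_ne_zero⟩
    obtain ⟨w, hxw, -⟩ := nSteps_succ.1 h
    exact absurd ⟨w, hxw⟩ hx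

end Reduction

/-- The outermost local commutation property of a reduction relation `R` and its outermost
reduction `Ro`. The alternative `Ro J H` covers an `R`-step that the outermost step erases. -/
def OutermostLocalCommutation {α : Type*} (R Ro : α → α → Prop) : Prop :=
  ∀ G H J, Ro G H → R G J → H ≠ J → Ro J H ∨ ∃ K, R H K ∧ Ro J K

section OutermostReduction

variable {α : Type*} {R Ro : α → α → Prop} {m n : ℕ} {G H J : α}

theorem OutermostLocalCommutation.exists_join_of_step (hcomm : OutermostLocalCommutation R Ro)
    (hGH : Ro G H) (hGJ : NSteps R m G J) :
    ∃ K k l, NSteps R k H K ∧ NSteps Ro l J K ∧ 1 + k ≤ m + l := by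
  induction m generalizing G H with
  | zero =>
    obtain rfl := nSteps_zero.1 hGJ
    exact ⟨H, 0, 1, nSteps_zero.2 rfl, nSteps_succ.2 ⟨H, hGH, nSteps_zero.2 rfl⟩, by lia⟩
  | succ m ih =>
    obtain ⟨L, hGL, hLJ⟩ := nSteps_succ.1 hGJ
    by_cases hHL : H = L
    · subst hHL
      exact ⟨J, m, 0, hLJ, nSteps_zero.2 rfl, by lia⟩
    · obtain hLH | ⟨M, hHM, hLM⟩ := hcomm G H L hGH hGL hHL
      · obtain ⟨K, k, l, hHK, hJK, hkl⟩ := ih hLH hLJ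
        exact ⟨K, k, l, hHK, hJK, by lia⟩
      · obtain ⟨K, k, l, hMK, hJK, hkl⟩ := ih hLM hLJ
        exact ⟨K, k + 1, l, nSteps_succ.2 ⟨M, hHM, hMK⟩, hJK, by lia⟩

theorem OutermostLocalCommutation.exists_join (hcomm : OutermostLocalCommutation R Ro)
    (hGH : NSteps Ro n G H) (hGJ : NSteps R m G J) :
    ∃ K k l, NSteps R k H K ∧ NSteps Ro l J K ∧ n + k ≤ m + l := by
  induction n generalizing G J m with
  | zero =>
    obtain rfl := nSteps_zero.1 hGH
    exact ⟨J, m, 0, hGJ, nSteps_zero.2 rfl, by lia⟩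
  | succ n ih =>
    obtain ⟨L, hGL, hLH⟩ := nSteps_succ.1 hGH
    obtain ⟨M, p, q, hLM, hJM, hpq⟩ := hcomm.exists_join_of_step hGL hGJ
    obtain ⟨K, k, l, hHK, hMK, hkl⟩ := ih hLH hLM
    exact ⟨K, k, q + l, hHK, hJM.trans hMK, by lia⟩

theorem outermost_fastest_general (hcomm : OutermostLocalCommutation R Ro)
    (hGH : NSteps Ro n G H) (hH : RNormal R H) (hGJ : NSteps R m G J) (hJ : RNormal Ro J) :
    H = J ∧ n ≤ m := by
  obtain ⟨K, k, l, hHK, hJK, hkl⟩ := hcomm.exists_join hGH hGJ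
  obtain ⟨rfl, rfl⟩ := hH.nSteps_iff.1 hHK
  obtain ⟨rfl, rfl⟩ := hJ.nSteps_iff.1 hJK
  exact ⟨rfl, hkl⟩

end OutermostReduction

theorem outermost_fastest
    {α : Type*} (R Ro : α → α → Prop)
    (hsub : ∀ x y, Ro x y → R x y)
    (hcomm : ∀ G H J, Ro G H → R G J → H ≠ J →
      Ro J H ∨ ∃ K, R H K ∧ Ro J K)
    (n m : ℕ) (G H J : α)
    (hH : NSteps Ro n G H) (hHnf : RNormal R H)
    (hJ : NSteps R m G J) (hJnf : RNormal R J) :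
    H = J ∧ n ≤ m :=
  outermost_fastest_general hcomm hH hHnf hJ (hJnf.anti hsub)
end

section
/- Let α be a type and let R, Ri be binary relations on α with Ri ⊆ R, satisfying the innermost local commutation property: whenever R G H and Ri G J with H ≠ J, either R J H, or there exists K with Ri H K and R J K. If G R^n H with H R-normal and G Ri^m J with J R-normal, then H = J and n ≤ m. -/
/-!
Push an arbitrary step `x → y` along an innermost reduction of length `m` from `x` to a normal form,
using local commutation at each innermost step, which is then either copied to the other side or
saved. No step leaves the normal form, so the pushed step must disappear on the way, by coinciding
with an innermost step, which is saved. So `y` reaches the same normal form by fewer than `m`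
innermost steps, and `n` arbitrary steps use up at least `n` of the `m` innermost ones.
-/

section

variable {α : Type*} {R Ri : α → α → Prop} {n m : ℕ} {x y z : α}

namespace NSteps

theorem eq_of_zero (h : NSteps R 0 x y) : x = y := by
  obtain ⟨f, rfl, rfl, -⟩ := h
  rfl

theorem exists_head (h : NSteps R (n + 1) x z) : ∃ y, R x y ∧ NSteps R n y z := by
  obtain ⟨f, rfl, rfl, hf⟩ := h
  exact ⟨f 1, hf 0 n.succ_pos, fun i => f (i + 1), rfl, rfl,
    fun i hi => hf (i + 1) (Nat.succ_lt_succ hi)⟩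

theorem head (hxy : R x y) (h : NSteps R n y z) : NSteps R (n + 1) x z := by
  obtain ⟨f, rfl, rfl, hf⟩ := h
  refine ⟨fun i => Nat.casesOn i x f, rfl, rfl, fun i hi => ?_⟩
  cases i with
  | zero => exact hxy
  | succ i => exact hf i (Nat.lt_of_succ_lt_succ hi)

theorem mono (hsub : ∀ x y, Ri x y → R x y) (h : NSteps Ri n x y) : NSteps R n x y := by
  obtain ⟨f, hx, hy, hf⟩ := h
  exact ⟨f, hx, hy, fun i hi => hsub _ _ (hf i hi)⟩

end NSteps

theorem RNormal.eq_of_nSteps (hx : RNormal R x) (h : NSteps R n x y) : x = y := by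
  cases n with
  | zero => exact h.eq_of_zero
  | succ n =>
    obtain ⟨w, hxw, -⟩ := h.exists_head
    exact (hx ⟨w, hxw⟩).elim

/-- Local commutation of innermost reduction `Ri` with full reduction `R`. The alternative `R w y`
is the case in which the step from `x` to `y` erases the innermost redex contracted in `w`. -/
def InnermostCommutes (R Ri : α → α → Prop) : Prop :=
  ∀ x y w, R x y → Ri x w → y ≠ w → R w y ∨ ∃ v, Ri y v ∧ R w v

theorem InnermostCommutes.exists_nSteps_lt_of_step (hcomm : InnermostCommutes R Ri)
    (hz : RNormal R z) (hxz : NSteps Ri m x z) (hxy : R x y) : ∃ k < m, NSteps Ri k y z := by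
  induction m generalizing x y with
  | zero => exact (hz ⟨y, hxz.eq_of_zero ▸ hxy⟩).elim
  | succ m ih =>
    obtain ⟨w, hxw, hwz⟩ := hxz.exists_head
    obtain rfl | hyw := eq_or_ne y w
    · exact ⟨m, m.lt_succ_self, hwz⟩
    obtain hwy | ⟨v, hyv, hwv⟩ := hcomm x y w hxy hxw hyw
    · obtain ⟨k, hk, hyz⟩ := ih hwz hwy
      exact ⟨k, hk.trans m.lt_succ_self, hyz⟩
    · obtain ⟨k, hk, hvz⟩ := ih hwz hwv
      exact ⟨k + 1, Nat.succ_lt_succ hk, hvz.head hyv⟩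

theorem innermost_slowest_general (hcomm : InnermostCommutes R Ri) (hz : RNormal R z)
    (hxy : NSteps R n x y) (hxz : NSteps Ri m x z) : ∃ k, n + k ≤ m ∧ NSteps Ri k y z := by
  induction n generalizing x m with
  | zero => exact ⟨m, (Nat.zero_add m).le, hxy.eq_of_zero ▸ hxz⟩
  | succ n ih =>
    obtain ⟨w, hxw, hwy⟩ := hxy.exists_head
    obtain ⟨l, hl, hwz⟩ := hcomm.exists_nSteps_lt_of_step hz hxz hxw
    obtain ⟨k, hk, hyz⟩ := ih hwy hwz
    exact ⟨k, by lia, hyz⟩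

end

theorem innermost_slowest
    {α : Type*} (R Ri : α → α → Prop)
    (hsub : ∀ x y, Ri x y → R x y)
    (hcomm : ∀ G H J, R G H → Ri G J → H ≠ J →
      R J H ∨ ∃ K, Ri H K ∧ R J K)
    (n m : ℕ) (G H J : α)
    (hH : NSteps R n G H) (hHnf : RNormal R H)
    (hJ : NSteps Ri m G J) (hJnf : RNormal R J) :
    H = J ∧ n ≤ m := by
  obtain ⟨k, hk, hHJ⟩ := innermost_slowest_general hcomm hJnf hH hJ
  exact ⟨hHnf.eq_of_nSteps (hHJ.mono hsub), (Nat.le_add_right n k).trans hk⟩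
end
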